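/- Let Σ be a simplicial complex on [m] (containing ∅, ghost vertices allowed). With basepoint * = 1 ∈ S⁰ = {−1,1}, the subspace Z_Σ(D¹,S⁰) ∖ S_Σ(D¹,S⁰) of [−1,1]^m, equipped with the subspace topology, is homeomorphic to the unbounded cone CΣ = Z_Σ([0,∞),{0}) ⊆ [0,∞)^m. -/

import Mathlib

open CategoryTheory

/-- A simplicial complex on a finite index set: a collection of finite subsets
containing the empty set and closed under passing to subsets
(ghost vertices are allowed). -/
def IsSimplicialComplex {I : Type} (S : Set (Finset I)) : Prop :=
  ∅ ∈ S ∧ ∀ σ ∈ S, ∀ τ : Finset I, τ ⊆ σ → τ ∈ S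

/-- The polyhedral product `Z_Σ(X, A) = ⋃_{σ∈Σ} {x ∈ X^m : xᵢ ∈ A for all i ∉ σ}`
determined by a collection `Σ` of subsets of `[m]` and a pair of sets `A ⊆ X`. -/
def polyhedralProduct {m : ℕ} (S : Set (Finset (Fin m))) {Y : Type*}
    (X A : Set Y) : Set (Fin m → Y) :=
  ⋃ σ ∈ S, {x | (∀ i, x i ∈ X) ∧ ∀ i, i ∉ σ → x i ∈ A}

/-- The subspace `S_Σ(X, A)` of the polyhedral product `Z_Σ(X, A)` consisting
of the points having at least one coordinate equal to the basepoint. -/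
def polyhedralProductBase {m : ℕ} (S : Set (Finset (Fin m))) {Y : Type*}
    (X A : Set Y) (pt : Y) : Set (Fin m → Y) :=
  {x ∈ polyhedralProduct S X A | ∃ i, x i = pt}


theorem mem_polyhedralProduct {m : ℕ} {S : Set (Finset (Fin m))} {Y : Type*} {X A : Set Y}
    {x : Fin m → Y} :
    x ∈ polyhedralProduct S X A ↔ ∃ σ ∈ S, (∀ i, x i ∈ X) ∧ ∀ i, i ∉ σ → x i ∈ A := by
  simp only [polyhedralProduct, Set.mem_iUnion, Set.mem_ofPred_eq, exists_prop]

theorem polyhedralProduct_diff_base {m : ℕ} (S : Set (Finset (Fin m))) {Y : Type*}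
    (X A : Set Y) (pt : Y) :
    polyhedralProduct S X A \ polyhedralProductBase S X A pt =
      polyhedralProduct S (X \ {pt}) (A \ {pt}) := by
  ext x
  simp only [polyhedralProductBase, Set.mem_sdiff, Set.mem_ofPred_eq, mem_polyhedralProduct,
    Set.mem_singleton_iff]
  constructor
  · rintro ⟨⟨σ, hσ, hX, hA⟩, hpt⟩
    have hne : ∀ i, x i ≠ pt := fun i hi => hpt ⟨⟨σ, hσ, hX, hA⟩, i, hi⟩
    exact ⟨σ, hσ, fun i => ⟨hX i, hne i⟩, fun i hi => ⟨hA i hi, hne i⟩⟩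
  · rintro ⟨σ, hσ, hX, hA⟩
    exact ⟨⟨σ, hσ, fun i => (hX i).1, fun i hi => (hA i hi).1⟩,
      fun ⟨_, i, hi⟩ => (hX i).2 hi⟩

theorem mapsTo_polyhedralProduct {m : ℕ} (S : Set (Finset (Fin m))) {Y Z : Type*}
    {X A : Set Y} {X' A' : Set Z} {f : Y → Z} (hX : Set.MapsTo f X X') (hA : Set.MapsTo f A A') :
    Set.MapsTo (fun (x : Fin m → Y) i => f (x i))
      (polyhedralProduct S X A) (polyhedralProduct S X' A') := by
  intro x hx
  obtain ⟨σ, hσ, hxX, hxA⟩ := mem_polyhedralProduct.1 hx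
  exact mem_polyhedralProduct.2 ⟨σ, hσ, fun i => hX (hxX i), fun i hi => hA (hxA i hi)⟩

theorem continuousOn_polyhedralProduct {m : ℕ} (S : Set (Finset (Fin m))) {Y Z : Type*}
    [TopologicalSpace Y] [TopologicalSpace Z] {X A : Set Y} {f : Y → Z} (hf : ContinuousOn f X) :
    ContinuousOn (fun (x : Fin m → Y) i => f (x i)) (polyhedralProduct S X A) :=
  continuousOn_pi.2 fun i => hf.comp (continuous_apply i).continuousOn fun _ hx =>
    (mem_polyhedralProduct.1 hx).elim fun _ h => h.2.1 i

/-- A homeomorphism of pairs `(X, A) ≅ (X', A')`, given by mutually inverse maps, induces a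
homeomorphism of polyhedral products. -/
def polyhedralProductHomeomorph {m : ℕ} (S : Set (Finset (Fin m))) {Y Z : Type*}
    [TopologicalSpace Y] [TopologicalSpace Z] {X A : Set Y} {X' A' : Set Z} {f : Y → Z} {g : Z → Y}
    (hf : ContinuousOn f X) (hg : ContinuousOn g X')
    (hfX : Set.MapsTo f X X') (hfA : Set.MapsTo f A A')
    (hgX : Set.MapsTo g X' X) (hgA : Set.MapsTo g A' A)
    (hgf : Set.LeftInvOn g f X) (hfg : Set.LeftInvOn f g X') :
    polyhedralProduct S X A ≃ₜ polyhedralProduct S X' A' where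
  toFun := (mapsTo_polyhedralProduct S hfX hfA).restrict
  invFun := (mapsTo_polyhedralProduct S hgX hgA).restrict
  left_inv x := Subtype.ext <| funext fun i =>
    (mem_polyhedralProduct.1 x.2).elim fun _ h => hgf (h.2.1 i)
  right_inv x := Subtype.ext <| funext fun i =>
    (mem_polyhedralProduct.1 x.2).elim fun _ h => hfg (h.2.1 i)
  continuous_toFun := (continuousOn_polyhedralProduct S hf).mapsToRestrict _
  continuous_invFun := (continuousOn_polyhedralProduct S hg).mapsToRestrict _

/-- With basepoint `* = 1 ∈ S⁰`, the complement of `S_Σ(D¹,S⁰)` in the real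
moment-angle complex `Z_Σ(D¹,S⁰) ⊆ [−1,1]^m` (with the subspace topology) is
homeomorphic to the unbounded cone `𝒞Σ = Z_Σ([0,∞), {0}) ⊆ [0,∞)^m`. -/
theorem realMomentAngle_diff_base_homeomorph_cone {m : ℕ}
    (S : Set (Finset (Fin m))) (hS : IsSimplicialComplex S) :
    Nonempty
      ((↥(polyhedralProduct S (Set.Icc (-1 : ℝ) 1) {-1, 1} \
          polyhedralProductBase S (Set.Icc (-1 : ℝ) 1) {-1, 1} 1)) ≃ₜ
        ↥(polyhedralProduct S (Set.Ici (0 : ℝ)) {0})) := by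
  rw [polyhedralProduct_diff_base]
  have hlt : ∀ x ∈ Set.Icc (-1 : ℝ) 1 \ {1}, 0 < 1 - x := fun x hx =>
    sub_pos.2 (lt_of_le_of_ne hx.1.2 hx.2)
  have hpos : ∀ y ∈ Set.Ici (0 : ℝ), 0 < y + 1 := fun y hy => by
    linarith [Set.mem_Ici.1 hy]
  refine ⟨polyhedralProductHomeomorph S (f := fun x => (1 + x) / (1 - x))
    (g := fun y => (y - 1) / (y + 1)) ?_ ?_ ?_ ?_ ?_ ?_ ?_ ?_⟩
  · exact ContinuousOn.div (by fun_prop) (by fun_prop) fun x hx => (hlt x hx).ne'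
  · exact ContinuousOn.div (by fun_prop) (by fun_prop) fun y hy => (hpos y hy).ne'
  · exact fun x hx => div_nonneg (by linarith [hx.1.1]) (hlt x hx).le
  · rintro x ⟨rfl | rfl, hx⟩
    · simp
    · exact absurd rfl hx
  · intro y hy
    have h := hpos y hy
    have hy' : (0 : ℝ) ≤ y := hy
    refine ⟨⟨?_, ?_⟩, ?_⟩
    · rw [le_div_iff₀ h]
      linarith
    · rw [div_le_one h]
      linarith
    · intro he
      have he' : (y - 1) / (y + 1) = 1 := he
      rw [div_eq_one_iff_eq h.ne'] at he'
      linarith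
  · rintro y rfl
    norm_num
  · intro x hx
    have h := (hlt x hx).ne'
    have h2 : (1 + x) / (1 - x) + 1 ≠ 0 := by
      rw [div_add_one h]
      exact div_ne_zero (by norm_num) h
    change ((1 + x) / (1 - x) - 1) / ((1 + x) / (1 - x) + 1) = x
    rw [div_eq_iff h2]
    field_simp
    ring
  · intro y hy
    have h := (hpos y hy).ne'
    have h2 : 1 - (y - 1) / (y + 1) ≠ 0 := by
      rw [one_sub_div h]
      exact div_ne_zero (by norm_num) h
    change (1 + (y - 1) / (y + 1)) / (1 - (y - 1) / (y + 1)) = y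
    rw [div_eq_iff h2]
    field_simp
    ring
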